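/- Let S be an idempotent semifield and w ∈ ⋀^d V, w' ∈ ⋀^{d'} V tropical Plücker vectors with w ∧ w' ≠ 0. Then w ∧ w' ∈ ⋀^{d+d'} V is also a tropical Plücker vector. Moreover, its coefficients are given by (w ∧ w')_K = Σ_{I ⊔ J = K} w_I w'_J, summing over partitions of K into disjoint subsets of sizes d and d'. -/

import Mathlib

/-!
In an idempotent semiring, write `x ≼ y` for `x + y = y`. For `d ≥ 1`, the relations for `w` say exactly
that the extension by zero `u` of `w` outside the `d`-subsets satisfies the exchange inequality
`u K * u L ≼ ∑_{i ∈ K ∖ L} u (K + p - i) * u (L - p + i)` for `p ∈ L ∖ K` (`Exch`).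

The wedge `w ∧ w'` is obtained from the direct sum of `w` and `w'`, which lives on two disjoint
copies of `[n]`, by identifying the two copies of each point, one point at a time. The exchange
inequality for the direct sum is immediate (`Exch.directSum`), so it suffices that it survives the
identification of two basis vectors `e_a`, `e_b` (`Exch.merge`). The only case which does not follow
by exchanging `p` in each term separately is `a ∈ K ∩ L`. Put `K = C + a`, `L = D + a` and let
`G` be the right-hand side for the merged vector. The mixed terms `x = u (C + a) * u (D + b)` and
`y = u (C + b) * u (D + a)` satisfy `x ≼ G + y`, by exchanging `p` and then `b`, whereas
`x * y = (u (C + a) * u (D + a)) * (u (C + b) * u (D + b)) ≼ G * G`.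
Hence `(x + G)² ≼ G * (x + G)`, and cancelling `x + G` gives `x ≼ G` (`le_of_le_add_of_mul_le`).
No total order on `S` is needed.
-/

open Finset

/-- The tropical Plücker relations for a rank-`d` tensor `w ∈ ⋀^d S^n`. -/
def TropPluckerRel {S : Type*} [Semifield S] (n d : ℕ) (w : Finset (Fin n) → S) : Prop :=
  ∀ A B : Finset (Fin n), A.card = d + 1 → B.card = d - 1 → ∀ p ∈ A \ B,
    ∑ i ∈ A \ B, w (A.erase i) * w (insert i B)
      = ∑ i ∈ (A \ B).erase p, w (A.erase i) * w (insert i B)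

/-- The wedge product of multivectors `w ∈ ⋀^d V`, `w' ∈ ⋀^{d'} V` in coordinates:
`(w ∧ w')_K = ∑_{I ⊔ J = K} w_I w'_J`, summing over partitions of `K` into disjoint
subsets `I` of size `d` and `J = K ∖ I`. -/
def wedgeMul {S : Type*} [Semifield S] {n : ℕ} (d : ℕ)
    (w w' : Finset (Fin n) → S) : Finset (Fin n) → S :=
  fun K => ∑ I ∈ K.powersetCard d, w I * w' (K \ I)

/-- The canonical order of an idempotent additive monoid. -/
def IdemLE {S : Type*} [Add S] (x y : S) : Prop := x + y = y

local infix:50 "≼" => IdemLE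

/-! ### The order of an idempotent semifield -/

section order

variable {S : Type*} [Semifield S]

theorem IdemLE.trans {x y z : S} (h : x ≼ y) (h' : y ≼ z) : x ≼ z := by
  unfold IdemLE at *
  rw [← h', ← add_assoc, h]

theorem IdemLE.zero (x : S) : 0 ≼ x := zero_add x

theorem IdemLE.add {x y z : S} (h : x ≼ z) (h' : y ≼ z) : x + y ≼ z := by
  unfold IdemLE at *
  rw [add_assoc, h', h]

theorem IdemLE.mul_left {x y : S} (h : x ≼ y) (c : S) : c * x ≼ c * y := by
  unfold IdemLE at *
  rw [← mul_add, h]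

theorem IdemLE.mul {x y x' y' : S} (h : x ≼ y) (h' : x' ≼ y') : x * x' ≼ y * y' := by
  refine (h'.mul_left x).trans ?_
  rw [mul_comm x, mul_comm y]
  exact h.mul_left y'

theorem IdemLE.sum {ι : Type*} {s : Finset ι} {f : ι → S} {z : S} (h : ∀ i ∈ s, f i ≼ z) :
    ∑ i ∈ s, f i ≼ z := by
  classical
  induction s using Finset.induction_on with
  | empty => simpa using IdemLE.zero z
  | insert a s ha ih =>
    rw [Finset.sum_insert ha]
    exact (h a (by simp)).add (ih fun i hi => h i (by simp [hi]))

theorem IdemLE.refl (hid : ∀ s : S, s + s = s) (x : S) : x ≼ x := hid x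

theorem IdemLE.add_right (hid : ∀ s : S, s + s = s) (x y : S) : x ≼ x + y := by
  unfold IdemLE
  rw [← add_assoc, hid]

theorem IdemLE.add_left (hid : ∀ s : S, s + s = s) (x y : S) : y ≼ x + y := by
  rw [add_comm]
  exact IdemLE.add_right hid y x

theorem IdemLE.single_le_sum (hid : ∀ s : S, s + s = s) {ι : Type*} {s : Finset ι} {f : ι → S}
    {i : ι} (hi : i ∈ s) : f i ≼ ∑ j ∈ s, f j := by
  classical
  rw [← Finset.add_sum_erase s f hi]
  exact IdemLE.add_right hid _ _

theorem IdemLE.antisymm {x y : S} (h : x ≼ y) (h' : y ≼ x) : x = y := by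
  unfold IdemLE at *
  rw [← h', add_comm, h]

/-- The cancellation step: this is where division in `S` is used. -/
theorem le_of_le_add_of_mul_le (hid : ∀ s : S, s + s = s) {x y G : S}
    (h : x ≼ G + y) (hxy : x * y ≼ G * G) : x ≼ G := by
  by_cases h0 : x + G = 0
  · have : x ≼ 0 := h0 ▸ IdemLE.add_right hid x G
    exact this.trans (IdemLE.zero G)
  have hG : G * G ≼ G * (x + G) := (IdemLE.add_left hid x G).mul_left G
  have hGx : G * x ≼ G * (x + G) := (IdemLE.add_right hid x G).mul_left G
  have hxx : x * x ≼ G * (x + G) := by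
    refine (h.mul_left x).trans ?_
    rw [mul_add, mul_comm x G]
    exact hGx.add (hxy.trans hG)
  have hsq : (x + G) * (x + G) ≼ G * (x + G) := by
    have e : (x + G) * (x + G) = (x * x + G * x) + G * (x + G) := by ring
    rw [e]
    exact (hxx.add hGx).add (IdemLE.refl hid _)
  have heq : (x + G) * (x + G) = G * (x + G) :=
    hsq.antisymm ((IdemLE.add_left hid x G).mul (IdemLE.refl hid _))
  exact mul_right_cancel₀ h0 heq

end order

/-! ### Exchange inequalities -/

section exchange

variable {S : Type*} [Semifield S] {α : Type*} [DecidableEq α]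

/-- The exchange inequality of valuated matroids, without any homogeneity assumption on `u`. -/
def Exch (u : Finset α → S) : Prop :=
  ∀ K L : Finset α, ∀ p ∈ L, p ∉ K →
    u K * u L ≼ ∑ i ∈ K \ L, u (insert p (K.erase i)) * u (insert i (L.erase p))

/-- The image of the multivector `u` under the linear map sending `e_b` to `e_a` and fixing all
other basis vectors. It is still indexed by subsets of `α`, and vanishes on those containing `b`. -/
def merge (a b : α) (u : Finset α → S) (K : Finset α) : S :=
  if b ∈ K then 0 else u K + if a ∈ K then u (insert b (K.erase a)) else 0

/-- Exchanging `p` in `u (C + a) * u (D + b)` produces one term not bounded by `G`, having both `a`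
and `b` in its second factor; exchanging `b` out of that factor leads to
`u (C + b) * u (D + a)`. -/
theorem Exch.mixed_le (hid : ∀ s : S, s + s = s) {u : Finset α → S} (hu : Exch u) {a b p : α}
    (hab : a ≠ b) {C D : Finset α} (haC : a ∉ C) (hbC : b ∉ C) (haD : a ∉ D) (hbD : b ∉ D)
    (hpD : p ∈ D) (hpC : p ∉ C) {G : S}
    (h₁ : ∀ i ∈ C \ D, u (insert a (insert p (C.erase i))) *
      u (insert b (insert i (D.erase p))) ≼ G)
    (h₂ : ∀ i ∈ C \ D, u (insert b (insert p (C.erase i))) *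
      u (insert a (insert i (D.erase p))) ≼ G) :
    u (insert a C) * u (insert b D) ≼ G + u (insert b C) * u (insert a D) := by
  have hG := IdemLE.add_right hid G (u (insert b C) * u (insert a D))
  have hz : u (insert p C) * u (insert a (insert b (D.erase p))) ≼
      G + u (insert b C) * u (insert a D) := by
    refine (hu _ _ b (by simp) (by grind)).trans (IdemLE.sum fun j hj => ?_)
    by_cases hjp : j = p
    · have e₁ : insert b ((insert p C).erase j) = insert b C := by grind
      have e₂ : insert j ((insert a (insert b (D.erase p))).erase b) = insert a D := by grind
      rw [e₁, e₂]
      exact IdemLE.add_left hid _ _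
    · have e₁ : insert b ((insert p C).erase j) = insert b (insert p (C.erase j)) := by grind
      have e₂ : insert j ((insert a (insert b (D.erase p))).erase b) =
          insert a (insert j (D.erase p)) := by grind
      rw [e₁, e₂]
      exact (h₂ j (by grind)).trans hG
  refine (hu _ _ p (by simp [hpD]) (by grind)).trans (IdemLE.sum fun i hi => ?_)
  by_cases hia : i = a
  · have e₁ : insert p ((insert a C).erase i) = insert p C := by grind
    have e₂ : insert i ((insert b D).erase p) = insert a (insert b (D.erase p)) := by grind
    rw [e₁, e₂]
    exact hz
  · have e₁ : insert p ((insert a C).erase i) = insert a (insert p (C.erase i)) := by grind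
    have e₂ : insert i ((insert b D).erase p) = insert b (insert i (D.erase p)) := by grind
    rw [e₁, e₂]
    exact (h₁ i (by grind)).trans hG

theorem Exch.same_le {u : Finset α → S} (hu : Exch u) {a p : α}
    {C D : Finset α} (haD : a ∉ D) (hpD : p ∈ D) (hpC : p ∉ C) {G : S}
    (h : ∀ i ∈ C \ D, u (insert a (insert p (C.erase i))) *
      u (insert a (insert i (D.erase p))) ≼ G) :
    u (insert a C) * u (insert a D) ≼ G := by
  refine (hu _ _ p (by simp [hpD]) (by grind)).trans (IdemLE.sum fun i hi => ?_)
  have e₁ : insert p ((insert a C).erase i) = insert a (insert p (C.erase i)) := by grind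
  have e₂ : insert i ((insert a D).erase p) = insert a (insert i (D.erase p)) := by grind
  rw [e₁, e₂]
  exact h i (by grind)

theorem le_merge (hid : ∀ s : S, s + s = s) (u : Finset α → S) {a b : α} {K : Finset α}
    (hb : b ∉ K) : u K ≼ merge a b u K := by
  rw [merge, if_neg hb]
  exact IdemLE.add_right hid _ _

theorem insert_le_merge (hid : ∀ s : S, s + s = s) (u : Finset α → S) {a b : α} {K : Finset α}
    (hb : b ∉ K) (ha : a ∈ K) : u (insert b (K.erase a)) ≼ merge a b u K := by
  rw [merge, if_neg hb, if_pos ha]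
  exact IdemLE.add_left hid _ _

/-- Identifying two basis vectors preserves the exchange inequality. -/
theorem Exch.merge (hid : ∀ s : S, s + s = s) {u : Finset α → S} (hu : Exch u) {a b : α}
    (hab : a ≠ b) : Exch (merge a b u) := by
  intro K L p hpL hpK
  by_cases hbK : b ∈ K
  · rw [_root_.merge, if_pos hbK, zero_mul]
    exact IdemLE.zero _
  by_cases hbL : b ∈ L
  · rw [_root_.merge.eq_def a b u L, if_pos hbL, mul_zero]
    exact IdemLE.zero _
  have hpb : p ≠ b := fun h => hbL (h ▸ hpL)
  set f : α → S := fun i =>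
    _root_.merge a b u (insert p (K.erase i)) * _root_.merge a b u (insert i (L.erase p)) with hf
  change _ ≼ ∑ i ∈ K \ L, f i
  set G := ∑ i ∈ K \ L, f i with hGdef
  have hG : ∀ i ∈ K \ L, f i ≼ G := fun i hi => IdemLE.single_le_sum hid hi
  -- The term `u K * u L` never causes a problem.
  have h00 : u K * u L ≼ G := by
    refine (hu K L p hpL hpK).trans (IdemLE.sum fun i hi => IdemLE.trans ?_ (hG i hi))
    exact (le_merge hid u (by grind)).mul (le_merge hid u (by grind))
  by_cases haK : a ∈ K
  · by_cases haL : a ∈ L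
    · obtain ⟨C, haC, rfl⟩ : ∃ C, a ∉ C ∧ insert a C = K :=
        ⟨K.erase a, by simp, Finset.insert_erase haK⟩
      obtain ⟨D, haD, rfl⟩ : ∃ D, a ∉ D ∧ insert a D = L :=
        ⟨L.erase a, by simp, Finset.insert_erase haL⟩
      have hbC : b ∉ C := by grind
      have hbD : b ∉ D := by grind
      have hpC : p ∉ C := by grind
      have hpD : p ∈ D := by grind
      have hle : ∀ i ∈ C \ D, ∀ s t, (s = a ∨ s = b) → (t = a ∨ t = b) →
          u (insert s (insert p (C.erase i))) * u (insert t (insert i (D.erase p))) ≼ G := by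
        intro i hi s t hs ht
        refine IdemLE.trans (IdemLE.mul ?_ ?_) (hG i (by grind))
        · rcases hs with rfl | rfl
          · have e : insert s (insert p (C.erase i)) = insert p ((insert s C).erase i) := by grind
            rw [e]
            exact le_merge hid u (by grind)
          · have e : insert s (insert p (C.erase i)) =
                insert s ((insert p ((insert a C).erase i)).erase a) := by grind
            rw [e]
            exact insert_le_merge hid u (by grind) (by grind)
        · rcases ht with rfl | rfl
          · have e : insert t (insert i (D.erase p)) = insert i ((insert t D).erase p) := by grind
            rw [e]
            exact le_merge hid u (by grind)
          · have e : insert t (insert i (D.erase p)) =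
                insert t ((insert i ((insert a D).erase p)).erase a) := by grind
            rw [e]
            exact insert_le_merge hid u (by grind) (by grind)
      have haa := h00
      have hbb : u (insert b C) * u (insert b D) ≼ G :=
        hu.same_le hbD hpD hpC fun i hi => hle i hi b b (.inr rfl) (.inr rfl)
      have hx : u (insert a C) * u (insert b D) ≼ G + u (insert b C) * u (insert a D) :=
        hu.mixed_le hid hab haC hbC haD hbD hpD hpC
          (fun i hi => hle i hi a b (.inl rfl) (.inr rfl))
          (fun i hi => hle i hi b a (.inr rfl) (.inl rfl))
      have hy : u (insert b C) * u (insert a D) ≼ G + u (insert a C) * u (insert b D) :=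
        hu.mixed_le hid hab.symm hbC haC hbD haD hpD hpC
          (fun i hi => hle i hi b a (.inr rfl) (.inl rfl))
          (fun i hi => hle i hi a b (.inl rfl) (.inr rfl))
      have hxy := haa.mul hbb
      have hx' := le_of_le_add_of_mul_le hid hx (by convert hxy using 1; ring)
      have hy' := le_of_le_add_of_mul_le hid hy (by convert hxy using 1; ring)
      rw [_root_.merge, _root_.merge, if_neg hbK, if_neg hbL, if_pos haK, if_pos haL,
        Finset.erase_insert haC, Finset.erase_insert haD, add_mul, mul_add, mul_add]
      exact (haa.add hx').add (hy'.add hbb)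
    · rw [_root_.merge, _root_.merge.eq_def a b u L, if_neg hbK, if_neg hbL, if_pos haK,
        if_neg haL, add_zero, add_mul]
      refine h00.add ((hu _ _ p hpL (by grind)).trans (IdemLE.sum fun i hi => ?_))
      by_cases hib : i = b
      · refine IdemLE.trans (IdemLE.mul ?_ ?_) (hG a (by grind))
        · have e : insert p ((insert b (K.erase a)).erase i) = insert p (K.erase a) := by grind
          rw [e]
          exact le_merge hid u (by grind)
        · have e : insert i (L.erase p) = insert b ((insert a (L.erase p)).erase a) := by grind
          rw [e]
          exact insert_le_merge hid u (by grind) (by grind)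
      · refine IdemLE.trans (IdemLE.mul ?_ ?_) (hG i (by grind))
        · have e : insert p ((insert b (K.erase a)).erase i) =
              insert b ((insert p (K.erase i)).erase a) := by grind
          rw [e]
          exact insert_le_merge hid u (by grind) (by grind)
        · exact le_merge hid u (by grind)
  · by_cases haL : a ∈ L
    · rw [_root_.merge, _root_.merge.eq_def a b u L, if_neg hbK, if_neg hbL, if_neg haK,
        if_pos haL, add_zero, mul_add]
      refine h00.add ?_
      by_cases hpa : p = a
      · refine (hu _ _ b (by grind) hbK).trans (IdemLE.sum fun i hi => ?_)
        refine IdemLE.trans (IdemLE.mul ?_ ?_) (hG i (by grind))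
        · have e : insert b (K.erase i) = insert b ((insert p (K.erase i)).erase a) := by grind
          rw [e]
          exact insert_le_merge hid u (by grind) (by grind)
        · have e : insert i ((insert b (L.erase a)).erase b) = insert i (L.erase p) := by grind
          rw [e]
          exact le_merge hid u (by grind)
      · refine (hu _ _ p (by grind) hpK).trans (IdemLE.sum fun i hi => ?_)
        refine IdemLE.trans (IdemLE.mul ?_ ?_) (hG i (by grind))
        · exact le_merge hid u (by grind)
        · have e : insert i ((insert b (L.erase a)).erase p) =
              insert b ((insert i (L.erase p)).erase a) := by grind
          rw [e]
          exact insert_le_merge hid u (by grind) (by grind)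
    · rw [_root_.merge, _root_.merge.eq_def a b u L, if_neg hbK, if_neg hbL, if_neg haK,
        if_neg haL, add_zero, add_zero]
      exact h00

/-- The direct sum, on the disjoint union of two copies of `α`; the left copy carries `v'`. -/
theorem Exch.directSum (hid : ∀ s : S, s + s = s) {v v' : Finset α → S} (hv : Exch v)
    (hv' : Exch v') : Exch (fun X : Finset (α ⊕ α) => v X.toRight * v' X.toLeft) := by
  intro K L p hpL hpK
  rcases p with p | p
  · have h := (hv' K.toLeft L.toLeft p (by simpa using hpL) (by simpa using hpK)).mul_left
      (v K.toRight * v L.toRight)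
    rw [Finset.mul_sum] at h
    rw [mul_mul_mul_comm]
    refine h.trans (IdemLE.sum fun i hi => ?_)
    refine IdemLE.trans ?_ (IdemLE.single_le_sum hid (i := Sum.inl i) (by simpa using hi))
    have e₁ : (insert (Sum.inl p) (K.erase (Sum.inl i))).toRight = K.toRight := by ext; simp
    have e₂ : (insert (Sum.inl i) (L.erase (Sum.inl p))).toRight = L.toRight := by ext; simp
    have e₃ : (insert (Sum.inl p) (K.erase (Sum.inl i))).toLeft = insert p (K.toLeft.erase i) := by
      ext; simp
    have e₄ : (insert (Sum.inl i) (L.erase (Sum.inl p))).toLeft = insert i (L.toLeft.erase p) := by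
      ext; simp
    simp only [e₁, e₂, e₃, e₄]
    rw [mul_mul_mul_comm]
    exact IdemLE.refl hid _
  · have h := (hv K.toRight L.toRight p (by simpa using hpL) (by simpa using hpK)).mul_left
      (v' K.toLeft * v' L.toLeft)
    rw [Finset.mul_sum] at h
    rw [mul_mul_mul_comm, mul_comm (v _ * v _)]
    refine h.trans (IdemLE.sum fun i hi => ?_)
    refine IdemLE.trans ?_ (IdemLE.single_le_sum hid (i := Sum.inr i) (by simpa using hi))
    have e₁ : (insert (Sum.inr p) (K.erase (Sum.inr i))).toLeft = K.toLeft := by ext; simp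
    have e₂ : (insert (Sum.inr i) (L.erase (Sum.inr p))).toLeft = L.toLeft := by ext; simp
    have e₃ : (insert (Sum.inr p) (K.erase (Sum.inr i))).toRight =
        insert p (K.toRight.erase i) := by ext; simp
    have e₄ : (insert (Sum.inr i) (L.erase (Sum.inr p))).toRight =
        insert i (L.toRight.erase p) := by ext; simp
    simp only [e₁, e₂, e₃, e₄]
    rw [mul_mul_mul_comm, mul_comm (v' _) (v _), mul_comm (v' _) (v _), mul_mul_mul_comm]
    exact IdemLE.refl hid _

/-- The result of merging `inr t` into `inl t` for all `t ∈ T`, with its values on those sets to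
which no further merging applies. -/
theorem Exch.exists_mergeAll (hid : ∀ s : S, s + s = s) {u₀ : Finset (α ⊕ α) → S} (hu : Exch u₀)
    (T : Finset α) : ∃ u : Finset (α ⊕ α) → S, Exch u ∧ ∀ K J : Finset α, Disjoint J T →
      u (K.disjSum J) = ∑ I ∈ (K ∩ T).powerset, u₀ ((K \ I).disjSum (J ∪ I)) := by
  induction T using Finset.induction_on with
  | empty => exact ⟨u₀, hu, fun K J _ => by simp⟩
  | insert t T ht ih =>
    obtain ⟨u, hE, hform⟩ := ih
    refine ⟨_root_.merge (Sum.inl t) (Sum.inr t) u, hE.merge hid (by simp), fun K J hJ => ?_⟩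
    rw [Finset.disjoint_insert_right] at hJ
    rw [_root_.merge, if_neg (by simpa using hJ.1), hform K J hJ.2]
    by_cases htK : t ∈ K
    · have e : insert (Sum.inr t) ((K.disjSum J).erase (Sum.inl t)) =
          (K.erase t).disjSum (insert t J) := by
        ext x; rcases x with x | x <;> simp
      rw [if_pos (by simpa using htK), e,
        hform _ _ (Finset.disjoint_insert_left.2 ⟨ht, hJ.2⟩),
        Finset.inter_insert_of_mem htK, Finset.sum_powerset_insert (by simp [ht])]
      congr 1
      have e' : K.erase t ∩ T = K ∩ T := by grind
      rw [e']
      refine Finset.sum_congr rfl fun I _ => ?_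
      congr 2 <;> grind
    · rw [if_neg (by simpa using htK), add_zero, Finset.inter_insert_of_notMem htK]

/-- Merging the two copies of `α` in the direct sum yields the wedge product. -/
theorem Exch.wedge (hid : ∀ s : S, s + s = s) [Fintype α] {v v' : Finset α → S} (hv : Exch v)
    (hv' : Exch v') : Exch (fun K : Finset α => ∑ I ∈ K.powerset, v I * v' (K \ I)) := by
  obtain ⟨u, hE, hform⟩ := (hv.directSum hid hv').exists_mergeAll hid Finset.univ
  have hval : ∀ K : Finset α, ∑ I ∈ K.powerset, v I * v' (K \ I) = u (K.disjSum ∅) := by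
    intro K
    rw [hform K ∅ (Finset.disjoint_empty_left _)]
    simp
  intro K L p hpL hpK
  simp only [hval]
  refine (hE _ _ (Sum.inl p) (by simpa using hpL) (by simpa using hpK)).trans
    (IdemLE.sum fun i hi => ?_)
  rcases i with i | i
  · refine IdemLE.trans ?_ (IdemLE.single_le_sum hid (i := i) (by simpa using hi))
    have e₁ : insert (Sum.inl p) ((K.disjSum ∅).erase (Sum.inl i)) =
        (insert p (K.erase i)).disjSum (∅ : Finset α) := by
      ext x; rcases x with x | x <;> simp
    have e₂ : insert (Sum.inl i) ((L.disjSum ∅).erase (Sum.inl p)) =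
        (insert i (L.erase p)).disjSum (∅ : Finset α) := by
      ext x; rcases x with x | x <;> simp
    rw [e₁, e₂]
    exact IdemLE.refl hid _
  · simp at hi

end exchange

/-! ### Plücker relations and exchange -/

/-- The extension by zero of `w` outside the `d`-subsets. -/
def homog {S : Type*} [Semifield S] {n : ℕ} (d : ℕ) (w : Finset (Fin n) → S)
    (K : Finset (Fin n)) : S :=
  if K.card = d then w K else 0

theorem exch_of_tropPluckerRel {S : Type*} [Semifield S] {n d : ℕ} {w : Finset (Fin n) → S}
    (hid : ∀ s : S, s + s = s) (h : TropPluckerRel n d w) : Exch (homog d w) := by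
  intro K L p hpL hpK
  by_cases hK : K.card = d
  swap
  · rw [homog, if_neg hK, zero_mul]
    exact IdemLE.zero _
  by_cases hL : L.card = d
  swap
  · rw [homog.eq_def d w L, if_neg hL, mul_zero]
    exact IdemLE.zero _
  have hp : p ∈ insert p K \ L.erase p := by simp
  have key := h (insert p K) (L.erase p) (by simp [hpK, hK])
    (by rw [Finset.card_erase_of_mem hpL, hL]) p hp
  rw [← Finset.add_sum_erase _ _ hp, Finset.erase_insert hpK, Finset.insert_erase hpL] at key
  have key' : w K * w L ≼ _ := key
  rw [homog, homog, if_pos hK, if_pos hL]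
  refine key'.trans (IdemLE.sum fun i hi => ?_)
  have hi' : i ∈ K \ L := by grind
  refine IdemLE.trans ?_ (IdemLE.single_le_sum hid hi')
  have hip : i ≠ p := by grind
  have c₁ : (insert p (K.erase i)).card = d := by grind
  have c₂ : (insert i (L.erase p)).card = d := by grind
  have e : insert p (K.erase i) = (insert p K).erase i := by grind
  rw [homog, homog, if_pos c₁, if_pos c₂, e]
  exact IdemLE.refl hid _

theorem wedgeMul_eq {S : Type*} [Semifield S] {n d d' : ℕ} (w w' : Finset (Fin n) → S)
    {K : Finset (Fin n)} (hK : K.card = d + d') :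
    wedgeMul d w w' K = ∑ I ∈ K.powerset, homog d w I * homog d' w' (K \ I) := by
  rw [wedgeMul, Finset.powersetCard_eq_filter, Finset.sum_filter]
  refine Finset.sum_congr rfl fun I hI => ?_
  have hsub := Finset.mem_powerset.1 hI
  by_cases hId : I.card = d
  · have : (K \ I).card = d' := by rw [Finset.card_sdiff_of_subset hsub]; omega
    simp [homog, hId, this]
  · simp [homog, hId]

/-- the wedge product of two tropical Plücker vectors is, when nonzero,
again a tropical Plücker vector; its coefficients are `(w∧w')_K = ∑_{I⊔J=K} w_I w'_J`. -/
theorem wedge_of_pluckers_isPlucker {S : Type*} [Semifield S]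
    (hid : ∀ s : S, s + s = s) (n d d' : ℕ) (w w' : Finset (Fin n) → S)
    (hw : ∃ I : Finset (Fin n), I.card = d ∧ w I ≠ 0)
    (hw' : ∃ I : Finset (Fin n), I.card = d' ∧ w' I ≠ 0)
    (hpl : TropPluckerRel n d w) (hpl' : TropPluckerRel n d' w')
    (hne : ∃ K : Finset (Fin n), K.card = d + d' ∧ wedgeMul d w w' K ≠ 0) :
    TropPluckerRel n (d + d') (wedgeMul d w w') := by
  intro A B hA hB p hp
  obtain ⟨hpA, hpB⟩ := Finset.mem_sdiff.1 hp
  by_cases hd : d + d' = 0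
  · obtain ⟨rfl, rfl⟩ : d = 0 ∧ d' = 0 := by omega
    obtain rfl : B = ∅ := by simpa using hB
    obtain ⟨I, hI, hI0⟩ := hw'
    obtain rfl : I = ∅ := by simpa using hI
    obtain ⟨q, rfl⟩ := Finset.card_eq_one.1 (by simpa using hA)
    obtain rfl : p = q := by simpa using hpA
    -- In rank `0` the truncated subtraction makes the relations say `w ∅ * w {p} = 0`.
    have h := hpl' {p} ∅ (by simp) (by simp) p (by simp)
    have hp0 : w' {p} = 0 := by simpa [hI0] using h
    simp [wedgeMul, hp0]
  have hexch := (exch_of_tropPluckerRel hid hpl).wedge hid (exch_of_tropPluckerRel hid hpl')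
  have cK : (A.erase p).card = d + d' := by rw [Finset.card_erase_of_mem hpA]; omega
  have cL : (insert p B).card = d + d' := by rw [Finset.card_insert_of_notMem hpB]; omega
  have h := hexch (A.erase p) (insert p B) p (by simp) (by simp)
  simp only [← wedgeMul_eq w w' cK, ← wedgeMul_eq w w' cL] at h
  rw [← Finset.add_sum_erase _ _ hp]
  change _ ≼ _
  refine h.trans (IdemLE.sum fun i hi => ?_)
  have hi' : i ∈ (A \ B).erase p := by grind
  refine IdemLE.trans ?_ (IdemLE.single_le_sum hid hi')
  have e₁ : insert p ((A.erase p).erase i) = A.erase i := by grind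
  have e₂ : insert i ((insert p B).erase p) = insert i B := by grind
  have c₁ : (A.erase i).card = d + d' := by grind
  have c₂ : (insert i B).card = d + d' := by grind
  rw [e₁, e₂, ← wedgeMul_eq w w' c₁, ← wedgeMul_eq w w' c₂]
  exact IdemLE.refl hid _
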